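/- Let B be a separable stable C*-algebra. If P ∈ C(B) is a projection with P ∼ 1 ∼ 1 − P in C(B), then there exists a projection P' ∈ M(B) with π(P') = P and P' ∼ 1 ∼ 1 − P' in M(B). -/

import Mathlib

open scoped MultiplierAlgebra

/-- The spectral projection `1_{≥0}(x)` of a self-adjoint element onto `[0, ∞)`,
obtained by applying the indicator function of `[0, ∞)` via the continuous
functional calculus. -/
noncomputable def posSpectralProj {C : Type*} [CStarAlgebra C] (x : C) : C :=
  cfc (fun t : ℝ => if 0 ≤ t then (1 : ℝ) else 0) x

/-- `x ∈ 𝓜(ℂ, B)` belongs to (the canonical image of) the ideal `B` of its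
multiplier algebra. -/
def inCanonicalIdeal {B : Type*} [NonUnitalCStarAlgebra B] (x : 𝓜(ℂ, B)) : Prop :=
  ∃ b : B, (b : 𝓜(ℂ, B)) = x

/-- Murray–von Neumann equivalence of projections. -/
def MvNEquiv {C : Type*} [Mul C] [Star C] (p q : C) : Prop :=
  ∃ v : C, star v * v = p ∧ v * star v = q

/-- `B` is a stable C*-algebra, encoded via the standard characterization (for σ-unital,
in particular separable, `B`): the multiplier algebra `𝓜(ℂ, B)` contains a sequence of
isometries with pairwise orthogonal ranges whose range projections sum to `1` strictly. -/
def IsStable (B : Type*) [NonUnitalCStarAlgebra B] : Prop :=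
  ∃ s : ℕ → 𝓜(ℂ, B),
    (∀ n, star (s n) * s n = 1) ∧
    (∀ m n, m ≠ n → star (s m) * s n = 0) ∧
    ∀ b : B, Filter.Tendsto
      (fun N : ℕ => (∑ n ∈ Finset.range N, s n * star (s n)) * (b : 𝓜(ℂ, B)))
      Filter.atTop (nhds (b : 𝓜(ℂ, B)))

/-!
Write `P = S S⋆` and `1 - P = T T⋆` with isometries `S`, `T` of the corona, so that `T⋆ S = 0`.

A lift of `T` is an isometry up to an error in `B`. Stability provides isometries `s n` with
`s n⋆ b → 0` for `b ∈ B`; cutting the lift down by some `s n` and normalising gives an isometry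
`w` of the multiplier algebra with `π(w)⋆ S = 0`. The range of `w` is spare room: a contractive
lift of `S` is corrected there to an isometric lift `σ`, leaving an isometry `r` with `r⋆ σ = 0`.

Then `P' = σ σ⋆` lifts `P` and is equivalent to `1`, while `1 - P'` dominates `r r⋆ ∼ 1`.
A projection of the form `e + r r⋆` is itself equivalent to `1` by an Eilenberg swindle: the
Hilbert-hotel isometries built from `e, r s₀, r s₁, …` have ranges summing strictly to `e + r r⋆`,
and two sequences of orthogonal isometries with strict range sums `p` and `q` give `p ∼ q`.
-/

open Filter Topology

section StarRing

variable {R : Type*} [Ring R] [StarRing R]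

/-- A family of isometries with pairwise orthogonal ranges in a unital star ring; an isometry is
encoded by `star v * v = 1`. -/
structure OrthogonalIsometries {ι : Type*} (s : ι → R) : Prop where
  star_mul_self : ∀ i, star (s i) * s i = 1
  star_mul_of_ne : ∀ i j, i ≠ j → star (s i) * s j = 0

theorem OrthogonalIsometries.comp_injective {ι κ : Type*} {s : ι → R}
    (hs : OrthogonalIsometries s) {f : κ → ι} (hf : f.Injective) :
    OrthogonalIsometries (s ∘ f) where
  star_mul_self i := hs.star_mul_self (f i)
  star_mul_of_ne i j hij := hs.star_mul_of_ne (f i) (f j) (hf.ne hij)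

theorem OrthogonalIsometries.star_sum_mul_sum {ι : Type*} [DecidableEq ι] {t : ι → R}
    (ht : OrthogonalIsometries t) (s : ι → R) (F G : Finset ι) :
    star (∑ i ∈ F, t i * star (s i)) * ∑ j ∈ G, t j * star (s j) =
      ∑ i ∈ F ∩ G, s i * star (s i) := by
  have term (i j : ι) : star (t i * star (s i)) * (t j * star (s j)) =
      if i = j then s i * star (s i) else 0 := by
    calc star (t i * star (s i)) * (t j * star (s j))
        = s i * (star (t i) * t j) * star (s j) := by
          simp only [star_mul, star_star, mul_assoc]
      _ = if i = j then s i * star (s i) else 0 := by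
          split_ifs with hij
          · rw [hij, ht.star_mul_self, mul_one]
          · rw [ht.star_mul_of_ne i j hij, mul_zero, zero_mul]
  simp only [star_sum, Finset.sum_mul_sum, term, Finset.sum_ite_eq, Finset.sum_ite_mem]

theorem star_add_mul_add_eq_one {y z a c : R} (hy : star y * y = 1) (hz : star z * z = 1)
    (hyz : star y * z = 0) (hac : star a * a + star c * c = 1) :
    star (y * a + z * c) * (y * a + z * c) = 1 := by
  have hzy : star z * y = 0 := by simpa using congrArg star hyz
  calc star (y * a + z * c) * (y * a + z * c)
      = star a * (star y * y) * a + star a * (star y * z) * c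
        + star c * (star z * y) * a + star c * (star z * z) * c := by
        rw [star_add, star_mul, star_mul]; noncomm_ring
    _ = 1 := by simpa [hy, hz, hyz, hzy] using hac

theorem mvnEquiv_one_iff {p : R} : MvNEquiv p 1 ↔ ∃ v : R, star v * v = 1 ∧ v * star v = p :=
  ⟨fun ⟨v, hp, h1⟩ => ⟨star v, by rwa [star_star], by rwa [star_star]⟩,
    fun ⟨v, h1, hp⟩ => ⟨star v, by rwa [star_star], by rwa [star_star]⟩⟩

theorem star_mul_eq_zero_of_mul_star_self_eq_one_sub {v w : R} (hv : star v * v = 1)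
    (hw : star w * w = 1) (hvw : w * star w = 1 - v * star v) : star w * v = 0 := by
  calc star w * v = star w * (w * star w) * v := by rw [← mul_assoc, hw, one_mul]
    _ = star w * v - star w * v * (star v * v) := by rw [hvw]; noncomm_ring
    _ = 0 := by rw [hv, mul_one, sub_self]

theorem isStarProjection_mul_star_self {v : R} (hv : star v * v = 1) :
    IsStarProjection (v * star v) where
  isIdempotentElem := by
    rw [IsIdempotentElem, mul_assoc, ← mul_assoc (star v), hv, one_mul]
  isSelfAdjoint := .mul_star_self v

/-- The element `v` transported to the range of the isometry `w` and extended by the identity on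
the orthogonal complement of that range. With `v` a proper isometry it frees room inside the range
of `w` without disturbing anything orthogonal to `w`. -/
def extendAlong (w v : R) : R := 1 - w * star w + w * v * star w

theorem star_mul_extendAlong {w : R} (hw : star w * w = 1) (v : R) :
    star w * extendAlong w v = v * star w := by
  simp only [extendAlong, mul_add, mul_sub, ← mul_assoc, hw]
  simp

theorem star_extendAlong (w v : R) : star (extendAlong w v) = extendAlong w (star v) := by
  simp only [extendAlong, star_add, star_sub, star_mul, star_star, star_one, mul_assoc]

theorem star_extendAlong_mul_self {w v : R} (hw : star w * w = 1) (hv : star v * v = 1) :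
    star (extendAlong w v) * extendAlong w v = 1 := by
  rw [star_extendAlong, extendAlong, add_mul, sub_mul, one_mul, mul_assoc w,
    mul_assoc (w * star v), star_mul_extendAlong hw, mul_assoc w, ← mul_assoc (star v), hv,
    one_mul, extendAlong]
  noncomm_ring

theorem star_mul_mul_extendAlong {w v t : R} (hw : star w * w = 1) (htv : star t * v = 0) :
    star (w * t) * extendAlong w v = 0 := by
  rw [star_mul, mul_assoc, star_mul_extendAlong hw, ← mul_assoc, htv, zero_mul]

theorem extendAlong_mul_of_star_mul_eq_zero {w S : R} (v : R) (hwS : star w * S = 0) :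
    extendAlong w v * S = S := by
  simp [extendAlong, add_mul, sub_mul, mul_assoc, hwS]

theorem star_mul_mul_self {v x : R} (hv : star v * v = 1) :
    star (v * x) * (v * x) = star x * x := by
  rw [star_mul, mul_assoc, ← mul_assoc (star v), hv, one_mul]

section Swindle

variable {s : ℕ → R} {e r : R}

/-- The partial isometries `e, r s₀, r s₁, …`, whose ranges add up to `e + r r⋆` when the `s n`
have ranges adding up to `1`. -/
def swindlePieces (s : ℕ → R) (e r : R) : ℕ → R
  | 0 => e
  | n + 1 => r * s n

/-- Hilbert-hotel isometries: on `e` the `n`-th one is the `n`-th swindle piece, on `1 - e` it is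
the next piece. They identify `1` with `e + r r⋆`. -/
def swindle (s : ℕ → R) (e r : R) (n : ℕ) : R :=
  swindlePieces s e r n * e + swindlePieces s e r (n + 1) * (1 - e)

theorem star_swindlePieces_mul_of_ne (hs : OrthogonalIsometries s) (he : IsStarProjection e)
    (hr : star r * r = 1) (her : e * r = 0) {m n : ℕ} (hmn : m ≠ n) :
    star (swindlePieces s e r m) * swindlePieces s e r n = 0 := by
  have hre : star r * e = 0 := by simpa [he.isSelfAdjoint.star_eq] using congrArg star her
  match m, n with
  | 0, 0 => exact absurd rfl hmn
  | 0, n + 1 =>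
    rw [swindlePieces, swindlePieces, he.isSelfAdjoint.star_eq, ← mul_assoc, her, zero_mul]
  | m + 1, 0 => rw [swindlePieces, swindlePieces, star_mul, mul_assoc, hre, mul_zero]
  | m + 1, n + 1 =>
    rw [swindlePieces, swindlePieces, star_mul, mul_assoc, ← mul_assoc (star r), hr, one_mul,
      hs.star_mul_of_ne m n (by omega)]

theorem star_swindlePieces_succ_mul_self (hs : OrthogonalIsometries s) (hr : star r * r = 1)
    (n : ℕ) : star (swindlePieces s e r (n + 1)) * swindlePieces s e r (n + 1) = 1 :=
  (star_mul_mul_self hr).trans (hs.star_mul_self n)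

theorem mul_star_swindlePieces_mul_self_mul (hs : OrthogonalIsometries s) (he : IsStarProjection e)
    (hr : star r * r = 1) (n : ℕ) :
    e * (star (swindlePieces s e r n) * swindlePieces s e r n) * e = e := by
  cases n with
  | zero => simp only [swindlePieces, he.isSelfAdjoint.star_eq, he.isIdempotentElem.eq]
  | succ n => rw [star_swindlePieces_succ_mul_self hs hr, mul_one, he.isIdempotentElem.eq]

theorem star_swindle_mul (he : IsStarProjection e) (m n : ℕ) :
    star (swindle s e r m) * swindle s e r n =
      e * (star (swindlePieces s e r m) * swindlePieces s e r n) * e +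
      e * (star (swindlePieces s e r m) * swindlePieces s e r (n + 1)) * (1 - e) +
      (1 - e) * (star (swindlePieces s e r (m + 1)) * swindlePieces s e r n) * e +
      (1 - e) * (star (swindlePieces s e r (m + 1)) * swindlePieces s e r (n + 1)) * (1 - e) := by
  simp only [swindle, star_add, star_mul, he.isSelfAdjoint.star_eq,
    he.one_sub.isSelfAdjoint.star_eq, add_mul, mul_add, mul_assoc]
  abel

theorem orthogonalIsometries_swindle (hs : OrthogonalIsometries s) (he : IsStarProjection e)
    (hr : star r * r = 1) (her : e * r = 0) : OrthogonalIsometries (swindle s e r) where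
  star_mul_self n := by
    rw [star_swindle_mul he, mul_star_swindlePieces_mul_self_mul hs he hr,
      star_swindlePieces_mul_of_ne hs he hr her n.succ_ne_self.symm,
      star_swindlePieces_mul_of_ne hs he hr her n.succ_ne_self,
      star_swindlePieces_succ_mul_self hs hr, mul_one, he.one_sub.isIdempotentElem.eq]
    simp
  star_mul_of_ne m n hmn := by
    rw [star_swindle_mul he, star_swindlePieces_mul_of_ne hs he hr her hmn,
      star_swindlePieces_mul_of_ne hs he hr her (Nat.succ_ne_succ_iff.2 hmn)]
    have upper : e * (star (swindlePieces s e r m) * swindlePieces s e r (n + 1)) *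
        (1 - e) = 0 := by
      rcases eq_or_ne m (n + 1) with rfl | h
      · rw [star_swindlePieces_succ_mul_self hs hr, mul_one, he.mul_one_sub_self]
      · rw [star_swindlePieces_mul_of_ne hs he hr her h, mul_zero, zero_mul]
    have lower : (1 - e) * (star (swindlePieces s e r (m + 1)) * swindlePieces s e r n) *
        e = 0 := by
      rcases eq_or_ne (m + 1) n with rfl | h
      · rw [star_swindlePieces_succ_mul_self hs hr, mul_one, he.one_sub_mul_self]
      · rw [star_swindlePieces_mul_of_ne hs he hr her h, mul_zero, zero_mul]
    rw [upper, lower]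
    simp

theorem swindle_mul_star_self (he : IsStarProjection e) (n : ℕ) :
    swindle s e r n * star (swindle s e r n) =
      swindlePieces s e r n * e * star (swindlePieces s e r n) -
        swindlePieces s e r (n + 1) * e * star (swindlePieces s e r (n + 1)) +
      r * (s n * star (s n)) * star r := by
  have expand (u v : R) : (u * e + v * (1 - e)) * star (u * e + v * (1 - e)) =
      u * (e * e) * star u + u * (e * (1 - e)) * star v + v * ((1 - e) * e) * star u +
        v * ((1 - e) * (1 - e)) * star v := by
    simp only [star_add, star_mul, he.isSelfAdjoint.star_eq,
      he.one_sub.isSelfAdjoint.star_eq, add_mul, mul_add, mul_assoc]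
    abel
  rw [swindle, expand, he.mul_one_sub_self, he.one_sub_mul_self, he.isIdempotentElem.eq,
    he.one_sub.isIdempotentElem.eq]
  simp only [swindlePieces, star_mul]
  noncomm_ring

theorem sum_swindle_mul_star_self (he : IsStarProjection e) (N : ℕ) :
    ∑ n ∈ Finset.range N, swindle s e r n * star (swindle s e r n) =
      e - swindlePieces s e r N * e * star (swindlePieces s e r N) +
        r * (∑ n ∈ Finset.range N, s n * star (s n)) * star r := by
  simp only [swindle_mul_star_self he, Finset.sum_add_distrib, Finset.sum_range_sub',
    Finset.mul_sum, Finset.sum_mul]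
  simp only [swindlePieces, he.isSelfAdjoint.star_eq, he.isIdempotentElem.eq]

end Swindle

end StarRing

section CStarAlgebra

theorem norm_eq_norm_of_star_mul_self_eq {A : Type*} [NonUnitalNormedRing A] [StarRing A]
    [CStarRing A] {x y : A}
    (h : star x * x = star y * y) : ‖x‖ = ‖y‖ := by
  rw [← mul_self_inj (norm_nonneg x) (norm_nonneg y), ← CStarRing.norm_star_mul_self, h,
    CStarRing.norm_star_mul_self]

theorem norm_le_one_of_star_mul_self_eq_one {A : Type*} [NormedRing A] [StarRing A]
    [CStarRing A] {v : A} (hv : star v * v = 1) : ‖v‖ ≤ 1 :=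
  (norm_eq_norm_of_star_mul_self_eq (by rw [hv, star_one, one_mul])).trans_le
    (IsStarProjection.one (R := A)).norm_le

theorem eq_of_forall_mul_eq {A : Type*} [NonUnitalNormedRing A] [StarRing A] [CStarRing A]
    {a b : A} (h : ∀ c, c * a = c * b) : a = b := by
  rw [← sub_eq_zero, ← CStarRing.star_mul_self_eq_zero_iff, mul_sub, h, sub_self]

theorem exists_continuous_mul_sq_add_sq_eq_one :
    ∃ g k : ℝ → ℝ, Continuous g ∧ Continuous k ∧ g 1 = 1 ∧ k 1 = 0 ∧
      ∀ t, t * g t ^ 2 + k t ^ 2 = 1 := by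
  have max_pos (t : ℝ) : 0 < max 1 t := one_pos.trans_le (le_max_left 1 t)
  refine ⟨fun t => (√(max 1 t))⁻¹, fun t => √(max (1 - t) 0),
    Continuous.inv₀ (by fun_prop) fun t => (Real.sqrt_pos.2 (max_pos t)).ne', by fun_prop,
    by simp, by simp, fun t => ?_⟩
  rw [inv_pow, Real.sq_sqrt (max_pos t).le, Real.sq_sqrt (le_max_right _ _)]
  rcases le_total t 1 with ht | ht
  · simp [ht]
  · simp [ht, mul_inv_cancel₀ (one_pos.trans_le ht).ne']

variable {A : Type*} [CStarAlgebra A]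

theorem star_mul_cfc_mul_self (x : A) {g : ℝ → ℝ}
    (hg : ContinuousOn g (spectrum ℝ (star x * x))) :
    star (x * cfc g (star x * x)) * (x * cfc g (star x * x)) =
      cfc (fun t => t * g t ^ 2) (star x * x) := by
  have hgsa : IsSelfAdjoint (cfc g (star x * x)) := cfc_predicate g _
  calc star (x * cfc g (star x * x)) * (x * cfc g (star x * x))
      = cfc g (star x * x) * (star x * x) * cfc g (star x * x) := by
        rw [star_mul, hgsa.star_eq]; simp only [mul_assoc]
    _ = cfc (fun t => g t * t * g t) (star x * x) := by
        rw [cfc_mul (fun t => g t * t) g (star x * x), cfc_mul g (fun t => t) (star x * x),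
          cfc_id' ℝ (star x * x)]
    _ = cfc (fun t => t * g t ^ 2) (star x * x) := cfc_congr fun t _ => by ring

theorem exists_mul_isometry_of_isUnit {x : A} (hx : IsUnit (star x * x)) :
    ∃ g : A, star (x * g) * (x * g) = 1 := by
  have spectrum_pos (t : ℝ) (ht : t ∈ spectrum ℝ (star x * x)) : 0 < t :=
    (spectrum_star_mul_self_nonneg t ht).lt_of_ne'
      fun h => spectrum.zero_notMem ℝ hx (h ▸ ht)
  have hcont : ContinuousOn (fun t : ℝ => (√t)⁻¹) (spectrum ℝ (star x * x)) :=
    Real.continuous_sqrt.continuousOn.inv₀ fun t ht => (Real.sqrt_pos.2 (spectrum_pos t ht)).ne'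
  refine ⟨cfc (fun t : ℝ => (√t)⁻¹) (star x * x), ?_⟩
  rw [star_mul_cfc_mul_self x hcont, ← cfc_one ℝ (star x * x)]
  refine cfc_congr fun t ht => ?_
  simp [inv_pow, Real.sq_sqrt (spectrum_pos t ht).le, (spectrum_pos t ht).ne']

variable {Q : Type*} [CStarAlgebra Q]

theorem map_cfc_of_map_eq_one (π : A →⋆ₐ[ℂ] Q) {h : A} (hsa : IsSelfAdjoint h) (hπh : π h = 1)
    {f : ℝ → ℝ} (hf : Continuous f) : π (cfc f h) = algebraMap ℝ Q (f 1) := by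
  have hπ : Continuous π := AddMonoidHomClass.continuous_of_bound π 1 fun x => by
    simpa using NonUnitalStarAlgHom.norm_apply_le π x
  rw [StarAlgHomClass.map_cfc (S := ℂ) π f h hf.continuousOn hπ hsa (hπh ▸ .one Q), hπh,
    cfc_apply_one]

theorem exists_isometric_column_lift {π : A →⋆ₐ[ℂ] Q} (hπ : Function.Surjective π) {S : Q}
    (hS : star S * S = 1) : ∃ a c : A, star a * a + star c * c = 1 ∧ π a = S ∧ π c = 0 := by
  obtain ⟨x, rfl⟩ := hπ S
  have hsa : IsSelfAdjoint (star x * x) := .star_mul_self x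
  have hπx : π (star x * x) = 1 := by rw [map_mul, map_star, hS]
  obtain ⟨g, k, hg, hk, hg1, hk1, hgk⟩ := exists_continuous_mul_sq_add_sq_eq_one
  refine ⟨x * cfc g (star x * x), cfc k (star x * x), ?_, ?_, ?_⟩
  · rw [star_mul_cfc_mul_self x hg.continuousOn, (cfc_predicate k (star x * x)).star_eq, ← sq,
      ← cfc_pow k 2 (star x * x) hk.continuousOn,
      ← cfc_add (star x * x) (fun t => t * g t ^ 2) (fun t => k t ^ 2) (by fun_prop) (by fun_prop),
      ← cfc_one ℝ (star x * x)]
    exact cfc_congr fun t _ => hgk t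
  · rw [map_mul, map_cfc_of_map_eq_one π hsa hπx hg, hg1, map_one, mul_one]
  · rw [map_cfc_of_map_eq_one π hsa hπx hk, hk1, map_zero]

theorem exists_isometry_lift_of_star_mul_eq_zero {π : A →⋆ₐ[ℂ] Q} (hπ : Function.Surjective π)
    {s : Fin 3 → A} (hs : OrthogonalIsometries s) {w : A} (hw : star w * w = 1) {S : Q}
    (hS : star S * S = 1) (hwS : star (π w) * S = 0) :
    ∃ σ r : A, star σ * σ = 1 ∧ π σ = S ∧ star r * r = 1 ∧ star r * σ = 0 := by
  obtain ⟨a, c, hac, ha, hc⟩ := exists_isometric_column_lift hπ hS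
  have range_orthogonal (i : Fin 3) (hi : i ≠ 0) :
      star (w * s i) * extendAlong w (s 0) = 0 :=
    star_mul_mul_extendAlong hw (hs.star_mul_of_ne i 0 hi)
  have isometry_mul (i : Fin 3) : star (w * s i) * (w * s i) = 1 :=
    (star_mul_mul_self hw).trans (hs.star_mul_self i)
  -- Inside the range of `w`, the copy `s 0` makes room, `s 1` absorbs the defect `c` of the
  -- contraction `a`, and `s 2` stays orthogonal to the lift.
  refine ⟨extendAlong w (s 0) * a + w * s 1 * c, w * s 2, ?_, ?_, isometry_mul 2, ?_⟩
  · refine star_add_mul_add_eq_one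
      (star_extendAlong_mul_self hw (hs.star_mul_self 0)) (isometry_mul 1) ?_ hac
    simpa using congrArg star (range_orthogonal 1 (by decide))
  · calc π (extendAlong w (s 0) * a + w * s 1 * c)
        = extendAlong (π w) (π (s 0)) * S := by simp [extendAlong, ha, hc, map_star]
      _ = S := extendAlong_mul_of_star_mul_eq_zero _ hwS
  · have h21 : star (w * s 2) * (w * s 1) = 0 := by
      rw [star_mul, mul_assoc, ← mul_assoc (star w), hw, one_mul,
        hs.star_mul_of_ne 2 1 (by decide)]
    rw [mul_add, ← mul_assoc, ← mul_assoc, range_orthogonal 2 (by decide), h21, zero_mul,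
      zero_mul, add_zero]

end CStarAlgebra

section Multiplier

variable {B : Type*} [NonUnitalCStarAlgebra B]

theorem isometry_multiplier_coe : Isometry (fun b : B => (b : 𝓜(ℂ, B))) :=
  AddMonoidHomClass.isometry_of_norm (DoubleCentralizer.coeHom (𝕜 := ℂ) (A := B)) fun b => by
    change ‖(b : 𝓜(ℂ, B))‖ = ‖b‖
    rw [← DoubleCentralizer.norm_fst, DoubleCentralizer.coe_fst,
      ContinuousLinearMap.opNorm_mul_apply]

theorem multiplier_mul_coe (x : 𝓜(ℂ, B)) (b : B) :
    x * (b : 𝓜(ℂ, B)) = (x.fst b : 𝓜(ℂ, B)) := by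
  have fst_mul (c d : B) : x.fst (c * d) = x.fst c * d :=
    eq_of_forall_mul_eq fun z => by
      rw [← x.central, ← mul_assoc, ← mul_assoc, ← x.central]
  refine DoubleCentralizer.ext _ _ _ _ (Prod.ext ?_ ?_)
  · ext c
    simpa using fst_mul b c
  · ext c
    simpa using x.central c b

theorem multiplier_ext {x y : 𝓜(ℂ, B)}
    (h : ∀ b : B, x * (b : 𝓜(ℂ, B)) = y * (b : 𝓜(ℂ, B))) : x = y := by
  have hfst : (x - y).fst = 0 := by
    ext b
    have hb := h b
    rw [multiplier_mul_coe, multiplier_mul_coe] at hb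
    simp [isometry_multiplier_coe.injective hb]
  rw [← sub_eq_zero, ← norm_eq_zero, ← DoubleCentralizer.norm_fst, hfst, norm_zero]

theorem multiplier_ext_star_mul_mul {x y : 𝓜(ℂ, B)}
    (h : ∀ b c : B, star (b : 𝓜(ℂ, B)) * x * c = star (b : 𝓜(ℂ, B)) * y * c) : x = y := by
  refine multiplier_ext fun c => ?_
  have hc (b : B) : star (b : 𝓜(ℂ, B)) * ((x - y) * c) = 0 := by
    rw [sub_mul, mul_sub, ← mul_assoc, ← mul_assoc, h, sub_self]
  rw [← sub_eq_zero, ← sub_mul, ← CStarRing.star_mul_self_eq_zero_iff]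
  nth_rw 1 [multiplier_mul_coe]
  exact hc _

theorem exists_strict_limit {Y : ℕ → 𝓜(ℂ, B)}
    (hY : ∀ b : B, CauchySeq fun N => Y N * (b : 𝓜(ℂ, B)))
    (hY' : ∀ b : B, CauchySeq fun N => star (Y N) * (b : 𝓜(ℂ, B))) :
    ∃ X : 𝓜(ℂ, B),
      (∀ b : B, Tendsto (fun N => Y N * (b : 𝓜(ℂ, B))) atTop (𝓝 (X * b))) ∧
      ∀ b : B, Tendsto (fun N => star (Y N) * (b : 𝓜(ℂ, B))) atTop (𝓝 (star X * b)) := by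
  have exists_fst_limit {Z : ℕ → 𝓜(ℂ, B)}
      (hZ : ∀ b : B, CauchySeq fun N => Z N * (b : 𝓜(ℂ, B))) (b : B) :
      ∃ l, Tendsto (fun N => (Z N).fst b) atTop (𝓝 l) := by
    refine cauchySeq_tendsto_of_complete ?_
    simpa only [cauchySeq_iff_tendsto_dist_atTop_0, multiplier_mul_coe,
      isometry_multiplier_coe.dist_eq] using hZ b
  choose L hL using exists_fst_limit hY
  choose R hR using exists_fst_limit hY'
  have hR' (b : B) : Tendsto (fun N => (Y N).snd b) atTop (𝓝 (star (R (star b)))) :=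
    ((continuous_star.tendsto _).comp (hR (star b))).congr fun N => by
      simp [DoubleCentralizer.star_fst]
  let X : 𝓜(ℂ, B) :=
    { toProd := (continuousLinearMapOfTendsto (fun N => (Y N).fst) (tendsto_pi_nhds.2 hL),
        continuousLinearMapOfTendsto (fun N => (Y N).snd) (tendsto_pi_nhds.2 hR'))
      central := fun b c =>
        tendsto_nhds_unique ((hR' b).mul_const c)
          (((hL c).const_mul b).congr fun N => ((Y N).central b c).symm) }
  have fst_X (b : B) : X.fst b = L b := rfl
  have fst_star_X (b : B) : (star X).fst b = R b := by
    rw [DoubleCentralizer.star_fst]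
    change star (star (R (star (star b)))) = R b
    rw [star_star, star_star]
  refine ⟨X, fun b => ?_, fun b => ?_⟩
  · simp only [multiplier_mul_coe, fst_X]
    exact (isometry_multiplier_coe.continuous.tendsto _).comp (hL b)
  · simp only [multiplier_mul_coe, fst_star_X]
    exact (isometry_multiplier_coe.continuous.tendsto _).comp (hR b)

/-- The isometries `s n` have pairwise orthogonal ranges whose projections sum to `p` in the
strict topology of the multiplier algebra. Only left multiplication on `B` is recorded, because
the partial sums are self-adjoint. -/
structure IsStrictDecomposition (s : ℕ → 𝓜(ℂ, B)) (p : 𝓜(ℂ, B)) : Prop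
    extends OrthogonalIsometries s where
  tendsto_sum_mul_coe : ∀ b : B, Tendsto
    (fun N => (∑ n ∈ Finset.range N, s n * star (s n)) * (b : 𝓜(ℂ, B))) atTop (𝓝 (p * b))

theorem IsStable.exists_isStrictDecomposition (h : IsStable B) :
    ∃ s : ℕ → 𝓜(ℂ, B), IsStrictDecomposition s 1 := by
  obtain ⟨s, h1, h0, hs⟩ := h
  exact ⟨s, ⟨h1, h0⟩, by simpa only [one_mul] using hs⟩

namespace IsStrictDecomposition

variable {s t : ℕ → 𝓜(ℂ, B)} {p q : 𝓜(ℂ, B)}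

theorem cauchySeq_sum_mul_coe (hs : IsStrictDecomposition s p) (ht : OrthogonalIsometries t)
    (b : B) : CauchySeq fun N =>
      (∑ n ∈ Finset.range N, t n * star (s n)) * (b : 𝓜(ℂ, B)) := by
  -- The inner products of the partial sums do not depend on `t`, so neither do the distances.
  have dist_eq (M N : ℕ) :
      dist ((∑ n ∈ Finset.range M, t n * star (s n)) * (b : 𝓜(ℂ, B)))
        ((∑ n ∈ Finset.range N, t n * star (s n)) * (b : 𝓜(ℂ, B))) =
      dist ((∑ n ∈ Finset.range M, s n * star (s n)) * (b : 𝓜(ℂ, B)))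
        ((∑ n ∈ Finset.range N, s n * star (s n)) * (b : 𝓜(ℂ, B))) := by
    rw [dist_eq_norm, dist_eq_norm, ← sub_mul, ← sub_mul]
    refine norm_eq_norm_of_star_mul_self_eq ?_
    rw [star_mul, star_mul, mul_assoc, mul_assoc, ← mul_assoc (star (_ - _)),
      ← mul_assoc (star (_ - _))]
    simp only [star_sub, sub_mul, mul_sub, ht.star_sum_mul_sum, hs.star_sum_mul_sum]
  simpa only [cauchySeq_iff_tendsto_dist_atTop_0, dist_eq] using
    (hs.tendsto_sum_mul_coe b).cauchySeq

theorem star_mul_self_eq_of_tendsto (hs : IsStrictDecomposition s p) (ht : OrthogonalIsometries t)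
    {X : 𝓜(ℂ, B)} (hX : ∀ b : B, Tendsto
      (fun N => (∑ n ∈ Finset.range N, t n * star (s n)) * (b : 𝓜(ℂ, B))) atTop (𝓝 (X * b))) :
    star X * X = p := by
  refine multiplier_ext_star_mul_mul fun b c => ?_
  have hlim := ((continuous_star.tendsto _).comp (hX b)).mul (hX c)
  have hlim' := (hs.tendsto_sum_mul_coe c).const_mul (star (b : 𝓜(ℂ, B)))
  have h := tendsto_nhds_unique hlim (hlim'.congr fun N => ?_)
  · simpa only [star_mul, mul_assoc] using h
  · have hN := ht.star_sum_mul_sum s (Finset.range N) (Finset.range N)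
    rw [Finset.inter_self] at hN
    rw [← hN, Function.comp_apply, star_mul]
    simp only [mul_assoc]

theorem mvnEquiv (hs : IsStrictDecomposition s p) (ht : IsStrictDecomposition t q) :
    MvNEquiv p q := by
  have star_partial (N : ℕ) : star (∑ n ∈ Finset.range N, t n * star (s n)) =
      ∑ n ∈ Finset.range N, s n * star (t n) := by
    simp only [star_sum, star_mul, star_star]
  obtain ⟨X, hX, hX'⟩ := exists_strict_limit
    (hs.cauchySeq_sum_mul_coe ht.toOrthogonalIsometries)
    (by simpa only [star_partial] using ht.cauchySeq_sum_mul_coe hs.toOrthogonalIsometries)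
  simp only [star_partial] at hX'
  exact ⟨X, hs.star_mul_self_eq_of_tendsto ht.toOrthogonalIsometries hX,
    by simpa only [star_star] using ht.star_mul_self_eq_of_tendsto hs.toOrthogonalIsometries hX'⟩

theorem tendsto_star_mul_coe (hs : IsStrictDecomposition s p) (b : B) :
    Tendsto (fun n => star (s n) * (b : 𝓜(ℂ, B))) atTop (𝓝 0) := by
  have hlim := ((hs.tendsto_sum_mul_coe b).comp (tendsto_add_atTop_nat 1)).sub
    (hs.tendsto_sum_mul_coe b)
  rw [sub_self] at hlim
  refine squeeze_zero_norm (fun n => le_of_eq ?_) (tendsto_zero_iff_norm_tendsto_zero.1 hlim)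
  rw [Function.comp_apply, Finset.sum_range_succ, add_mul, add_sub_cancel_left, mul_assoc]
  exact (norm_eq_norm_of_star_mul_self_eq (star_mul_mul_self (hs.star_mul_self n))).symm

theorem exists_isometry_map_eq_mul (hs : IsStrictDecomposition s p) {Q : Type*} [CStarAlgebra Q]
    {π : 𝓜(ℂ, B) →⋆ₐ[ℂ] Q} (hπ : Function.Surjective π)
    (hker : ∀ m, π m = 0 → inCanonicalIdeal m) {T : Q} (hT : star T * T = 1) :
    ∃ (w : 𝓜(ℂ, B)) (g : Q), star w * w = 1 ∧ π w = T * g := by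
  obtain ⟨x, rfl⟩ := hπ T
  obtain ⟨b, hb⟩ := hker (1 - star x * x) (by
    rw [map_sub, map_mul, map_star, hT, map_one, sub_self])
  obtain ⟨n, hn⟩ := ((hs.tendsto_star_mul_coe b).norm.eventually_lt_const
    (by simp : ‖(0 : 𝓜(ℂ, B))‖ < 1)).exists
  -- The defect `1 - x⋆x` lies in `B`, so compressing it by a late `s n` makes it small.
  have compress : 1 - star (s n) * b * s n = star (x * s n) * (x * s n) := by
    rw [hb, mul_sub, sub_mul, mul_one, hs.star_mul_self, star_mul, sub_sub_cancel]
    simp only [mul_assoc]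
  have compress_lt : ‖star (s n) * (b : 𝓜(ℂ, B)) * s n‖ < 1 :=
    ((norm_mul_le _ _).trans (mul_le_of_le_one_right (norm_nonneg _)
      (norm_le_one_of_star_mul_self_eq_one (hs.star_mul_self n)))).trans_lt hn
  obtain ⟨g, hg⟩ := exists_mul_isometry_of_isUnit
    (compress ▸ isUnit_one_sub_of_norm_lt_one compress_lt)
  exact ⟨x * s n * g, π (s n * g), hg, by rw [mul_assoc, map_mul]⟩

end IsStrictDecomposition

theorem IsStrictDecomposition.tendsto_swindlePieces_mul_coe {s : ℕ → 𝓜(ℂ, B)} {p : 𝓜(ℂ, B)}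
    (hs : IsStrictDecomposition s p) {e r : 𝓜(ℂ, B)} (he : IsStarProjection e)
    (hr : star r * r = 1) (b : B) :
    Tendsto (fun N => swindlePieces s e r N * e * star (swindlePieces s e r N) * (b : 𝓜(ℂ, B)))
      atTop (𝓝 0) := by
  have norm_succ_le (N : ℕ) : ‖swindlePieces s e r (N + 1) * e *
      star (swindlePieces s e r (N + 1)) * (b : 𝓜(ℂ, B))‖ ≤
        ‖star (s N) * ((star r).fst b : 𝓜(ℂ, B))‖ := by
    rw [← multiplier_mul_coe]
    calc ‖swindlePieces s e r (N + 1) * e * star (swindlePieces s e r (N + 1)) * (b : 𝓜(ℂ, B))‖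
        = ‖r * s N * (e * (star (s N) * (star r * (b : 𝓜(ℂ, B)))))‖ := by
          simp only [swindlePieces, star_mul, mul_assoc]
      _ = ‖e * (star (s N) * (star r * (b : 𝓜(ℂ, B))))‖ :=
          norm_eq_norm_of_star_mul_self_eq (star_mul_mul_self
            ((star_mul_mul_self hr).trans (hs.star_mul_self N)))
      _ ≤ ‖star (s N) * (star r * (b : 𝓜(ℂ, B)))‖ :=
          (norm_mul_le _ _).trans (mul_le_of_le_one_left (norm_nonneg _) he.norm_le)
  exact (tendsto_add_atTop_iff_nat 1).1 (squeeze_zero_norm norm_succ_le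
    (tendsto_zero_iff_norm_tendsto_zero.1 (hs.tendsto_star_mul_coe _)))

theorem IsStrictDecomposition.swindle {s : ℕ → 𝓜(ℂ, B)} (hs : IsStrictDecomposition s 1)
    {e r : 𝓜(ℂ, B)} (he : IsStarProjection e) (hr : star r * r = 1) (her : e * r = 0) :
    IsStrictDecomposition (swindle s e r) (e + r * star r) where
  toOrthogonalIsometries := orthogonalIsometries_swindle hs.toOrthogonalIsometries he hr her
  tendsto_sum_mul_coe b := by
    have star_r_mul : star r * (b : 𝓜(ℂ, B)) = ((star r).fst b : 𝓜(ℂ, B)) :=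
      multiplier_mul_coe _ b
    have range_r_limit : Tendsto (fun N => r * ((∑ n ∈ Finset.range N, s n * star (s n)) *
        (star r * (b : 𝓜(ℂ, B))))) atTop (𝓝 (r * (star r * b))) := by
      simpa only [star_r_mul, one_mul] using
        (hs.tendsto_sum_mul_coe ((star r).fst b)).const_mul r
    have hlim := ((hs.tendsto_swindlePieces_mul_coe he hr b).const_sub (e * (b : 𝓜(ℂ, B)))).add
      range_r_limit
    rw [sub_zero, ← mul_assoc, ← add_mul] at hlim
    refine hlim.congr fun N => ?_
    rw [sum_swindle_mul_star_self he]
    simp only [add_mul, sub_mul, mul_assoc]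

theorem mvnEquiv_one_of_isometry_mul_eq {s : ℕ → 𝓜(ℂ, B)} (hs : IsStrictDecomposition s 1)
    {p r : 𝓜(ℂ, B)} (hp : IsStarProjection p) (hr : star r * r = 1) (hpr : p * r = r) :
    MvNEquiv p 1 := by
  have he : IsStarProjection (p - r * star r) :=
    (isStarProjection_mul_star_self hr).sub_of_mul_eq_right hp (by rw [← mul_assoc, hpr])
  have her : (p - r * star r) * r = 0 := by
    rw [sub_mul, hpr, mul_assoc, hr, mul_one, sub_self]
  simpa using (hs.swindle he hr her).mvnEquiv hs

theorem exists_isometry_lift_mvnEquiv_one {s : ℕ → 𝓜(ℂ, B)} (hs : IsStrictDecomposition s 1)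
    {Q : Type*} [CStarAlgebra Q] {π : 𝓜(ℂ, B) →⋆ₐ[ℂ] Q} (hπ : Function.Surjective π)
    (hker : ∀ m, π m = 0 → inCanonicalIdeal m) {S T : Q} (hS : star S * S = 1)
    (hT : star T * T = 1) (hTS : star T * S = 0) :
    ∃ σ : 𝓜(ℂ, B), star σ * σ = 1 ∧ π σ = S ∧ MvNEquiv (1 - σ * star σ) 1 := by
  obtain ⟨w, g, hw, hwT⟩ := hs.exists_isometry_map_eq_mul hπ hker hT
  have hwS : star (π w) * S = 0 := by rw [hwT, star_mul, mul_assoc, hTS, mul_zero]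
  obtain ⟨σ, r, hσ, hσS, hr, hrσ⟩ := exists_isometry_lift_of_star_mul_eq_zero hπ
    (hs.comp_injective Fin.val_injective) hw hS hwS
  have hσr : star σ * r = 0 := by simpa using congrArg star hrσ
  exact ⟨σ, hσ, hσS, mvnEquiv_one_of_isometry_mul_eq hs
    (isStarProjection_mul_star_self hσ).one_sub hr
    (by rw [sub_mul, one_mul, mul_assoc, hσr, mul_zero, sub_zero])⟩

end Multiplier

theorem stmt16_general {B Q : Type*} [NonUnitalCStarAlgebra B] [CStarAlgebra Q]
    (hstable : IsStable B) (π : 𝓜(ℂ, B) →⋆ₐ[ℂ] Q) (hπ : Function.Surjective π)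
    (hker : ∀ m : 𝓜(ℂ, B), π m = 0 → inCanonicalIdeal m)
    (P : Q) (hP1 : MvNEquiv P (1 : Q)) (hP2 : MvNEquiv (1 - P) (1 : Q)) :
    ∃ P' : 𝓜(ℂ, B), IsSelfAdjoint P' ∧ IsIdempotentElem P' ∧ π P' = P ∧
      MvNEquiv P' (1 : 𝓜(ℂ, B)) ∧ MvNEquiv (1 - P') (1 : 𝓜(ℂ, B)) := by
  obtain ⟨s, hs⟩ := hstable.exists_isStrictDecomposition
  obtain ⟨S, hS, rfl⟩ := mvnEquiv_one_iff.1 hP1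
  obtain ⟨T, hT, hTS⟩ := mvnEquiv_one_iff.1 hP2
  obtain ⟨σ, hσ, rfl, hcompl⟩ := exists_isometry_lift_mvnEquiv_one hs hπ hker hS hT
    (star_mul_eq_zero_of_mul_star_self_eq_one_sub hS hT hTS)
  have hproj := isStarProjection_mul_star_self hσ
  exact ⟨σ * star σ, hproj.isSelfAdjoint, hproj.isIdempotentElem, by rw [map_mul, map_star],
    mvnEquiv_one_iff.2 ⟨σ, hσ, rfl⟩, hcompl⟩

/-- Let `B` be a separable stable C*-algebra, `π : M(B) → C(B)` the corona
quotient map (encoded as a surjective `*`-homomorphism onto a unital C*-algebra `Q` with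
kernel the canonical ideal `B`).  If `P ∈ C(B)` is a projection with `P ∼ 1 ∼ 1 − P`, then
there is a projection `P' ∈ M(B)` with `π(P') = P` and `P' ∼ 1 ∼ 1 − P'`. -/
theorem stmt16 {B Q : Type*} [NonUnitalCStarAlgebra B] [TopologicalSpace.SeparableSpace B]
    [CStarAlgebra Q] (hstable : IsStable B)
    (π : 𝓜(ℂ, B) →⋆ₐ[ℂ] Q) (hπ : Function.Surjective π)
    (hker : ∀ m : 𝓜(ℂ, B), π m = 0 ↔ inCanonicalIdeal m)
    (P : Q) (hPsa : IsSelfAdjoint P) (hPidem : IsIdempotentElem P)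
    (hP1 : MvNEquiv P (1 : Q)) (hP2 : MvNEquiv (1 - P) (1 : Q)) :
    ∃ P' : 𝓜(ℂ, B), IsSelfAdjoint P' ∧ IsIdempotentElem P' ∧ π P' = P ∧
      MvNEquiv P' (1 : 𝓜(ℂ, B)) ∧ MvNEquiv (1 - P') (1 : 𝓜(ℂ, B)) := by
  exact stmt16_general hstable π hπ (fun m => (hker m).1) P hP1 hP2
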